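/- For every bounded nondecreasing càdlàg path q : [0,1) → S^D_+ and every ε > 0, there exist K ∈ ℕ, c > 0, and matrices 0 = q₁ ≤ q₂ ≤ … ≤ q_K with q₂, …, q_K ∈ S^D_{++}, such that the path r(u) = c·u·Id + Σ_{k=1}^{K} q_k 𝟏_{[(k−1)/K, k/K)}(u) belongs to Q_{∞,↑} and satisfies ∫₀¹ |q(u) − r(u)| du < ε. In particular, Q_{∞,↑} is dense, for the L¹ distance, in the set of bounded nondecreasing càdlàg paths from [0,1) to S^D_+. -/

import Mathlib

/-!
STATEMENT 11: For every bounded nondecreasing càdlàg path `q : [0,1) → S^D_+` and every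
`ε > 0`, there exist `K ≥ 1`, `c > 0` and matrices `0 = q₁ ≤ q₂ ≤ … ≤ q_K` with
`q₂, …, q_K ∈ S^D_{++}`, such that `r(u) = c·u·Id + Σ_{k=1}^K q_k 𝟙_{[(k−1)/K, k/K)}(u)`
belongs to `Q_{∞,↑}` and `∫₀¹ |q(u) − r(u)| du < ε`. (Here `Q` indexes `q_{k+1} = Q k` for
`k : Fin K`.) In particular `Q_{∞,↑}` is dense in L¹ in the set of bounded nondecreasing
càdlàg paths from `[0,1)` to `S^D_+`.
-/

noncomputable section

/-- `D × D` real matrices. -/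
abbrev Mat (D : ℕ) := Matrix (Fin D) (Fin D) ℝ

/-- Frobenius inner product `a · b = ∑_{i,j} a_{ij} b_{ij}`. -/
def dotp {D : ℕ} (a b : Mat D) : ℝ := ∑ i, ∑ j, a i j * b i j

/-- Frobenius norm. -/
def fnorm {D : ℕ} (a : Mat D) : ℝ := Real.sqrt (dotp a a)

/-- The largest eigenvalue of a matrix. -/
def lamMax {D : ℕ} (a : Mat D) : ℝ :=
  sSup {t : ℝ | ∃ v : Fin D → ℝ, v ≠ 0 ∧ a.mulVec v = t • v}

/-- The smallest eigenvalue of a matrix. -/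
def lamMin {D : ℕ} (a : Mat D) : ℝ :=
  sInf {t : ℝ | ∃ v : Fin D → ℝ, v ≠ 0 ∧ a.mulVec v = t • v}

/-- `q` is càdlàg on `[0,1)`: right-continuous on `[0,1)` with left limits on `(0,1)`. -/
def Cadlag {D : ℕ} (q : ℝ → Mat D) : Prop :=
  (∀ u ∈ Set.Ico (0:ℝ) 1, ContinuousWithinAt q (Set.Ici u) u) ∧
  (∀ u ∈ Set.Ioo (0:ℝ) 1, ∃ L : Mat D, Filter.Tendsto q (nhdsWithin u (Set.Iio u)) (nhds L))

/-- `q ∈ Q_{∞,↑}`. -/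
def IsQInftyUp {D : ℕ} (q : ℝ → Mat D) : Prop :=
  (∀ u ∈ Set.Ico (0:ℝ) 1, (q u).PosSemidef) ∧
  (∃ C : ℝ, ∀ u ∈ Set.Ico (0:ℝ) 1, fnorm (q u) ≤ C) ∧
  (∀ u v : ℝ, 0 ≤ u → u ≤ v → v < 1 → (q v - q u).PosSemidef) ∧
  Cadlag q ∧
  q 0 = 0 ∧
  (∃ c : ℝ, 0 < c ∧ ∀ u v : ℝ, 0 ≤ u → u < v → v < 1 →
    ((q v - q u) - (c * (v - u)) • (1 : Mat D)).PosSemidef ∧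
    lamMax (q v - q u) / lamMin (q v - q u) ≤ 1 / c)

def lone {D : ℕ} (a : Mat D) : ℝ := ∑ i, ∑ j, |a i j|

lemma lone_nonneg {D : ℕ} (a : Mat D) : 0 ≤ lone a :=
  Finset.sum_nonneg fun _ _ => Finset.sum_nonneg fun _ _ => abs_nonneg _

lemma lone_add {D : ℕ} (a b : Mat D) : lone (a + b) ≤ lone a + lone b := by
  unfold lone
  rw [← Finset.sum_add_distrib]
  refine Finset.sum_le_sum fun i _ => ?_
  rw [← Finset.sum_add_distrib]
  exact Finset.sum_le_sum fun j _ => abs_add_le _ _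

lemma lone_smul {D : ℕ} (s : ℝ) (a : Mat D) : lone (s • a) = |s| * lone a := by
  unfold lone
  simp [Finset.mul_sum, abs_mul]

lemma lone_neg {D : ℕ} (a : Mat D) : lone (-a) = lone a := by
  unfold lone
  simp

lemma lone_sub {D : ℕ} (a b : Mat D) : lone (a - b) ≤ lone a + lone b := by
  rw [sub_eq_add_neg, ← lone_neg b]; exact lone_add _ _

lemma abs_le_lone {D : ℕ} (a : Mat D) (i j : Fin D) : |a i j| ≤ lone a := by
  refine le_trans ?_ (Finset.single_le_sum (f := fun i => ∑ j, |a i j|)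
    (fun _ _ => Finset.sum_nonneg fun _ _ => abs_nonneg _) (Finset.mem_univ i))
  exact Finset.single_le_sum (f := fun j => |a i j|) (fun _ _ => abs_nonneg _) (Finset.mem_univ j)

lemma fnorm_le_lone {D : ℕ} (a : Mat D) : fnorm a ≤ lone a := by
  unfold fnorm
  rw [Real.sqrt_le_left (lone_nonneg a), sq]
  unfold dotp
  conv_rhs => rw [lone, Finset.sum_mul]
  refine Finset.sum_le_sum fun i _ => ?_
  rw [Finset.sum_mul]
  refine Finset.sum_le_sum fun j _ => ?_
  rw [← abs_mul_abs_self]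
  exact mul_le_mul_of_nonneg_left (abs_le_lone a i j) (abs_nonneg _)

lemma abs_le_fnorm {D : ℕ} (a : Mat D) (i j : Fin D) : |a i j| ≤ fnorm a := by
  unfold fnorm
  apply Real.abs_le_sqrt
  unfold dotp
  refine le_trans ?_ (Finset.single_le_sum (f := fun i => ∑ j, a i j * a i j)
    (fun _ _ => Finset.sum_nonneg fun _ _ => mul_self_nonneg _) (Finset.mem_univ i))
  rw [sq]
  exact Finset.single_le_sum (f := fun j => a i j * a i j) (fun _ _ => mul_self_nonneg _)
    (Finset.mem_univ j)

lemma psd_entry {D : ℕ} {a : Mat D} (h : a.PosSemidef) (i j : Fin D) :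
    2 * |a i j| ≤ a i i + a j j := by
  have hs : a j i = a i j := by simpa using h.isHermitian.apply i j
  have h1 := h.dotProduct_mulVec_nonneg (Pi.single i 1 + Pi.single j 1)
  have h2 := h.dotProduct_mulVec_nonneg (Pi.single i 1 - Pi.single j 1)
  simp [Matrix.mulVec_add, Matrix.mulVec_sub, add_dotProduct, sub_dotProduct, hs] at h1 h2
  rcases abs_cases (a i j) with h | h <;> linarith

lemma psd_lone {D : ℕ} {a : Mat D} (h : a.PosSemidef) : lone a ≤ D * a.trace := by
  have : 2 * lone a ≤ 2 * (D * a.trace) := by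
    calc 2 * lone a = ∑ i, ∑ j, 2 * |a i j| := by simp [lone, Finset.mul_sum]
      _ ≤ ∑ i, ∑ j, (a i i + a j j) :=
        Finset.sum_le_sum fun i _ => Finset.sum_le_sum fun j _ => psd_entry h i j
      _ = 2 * (D * a.trace) := by
        simp [Finset.sum_add_distrib, Matrix.trace, Finset.mul_sum]; 
        rw [← Finset.sum_add_distrib]
        exact Finset.sum_congr rfl fun i _ => by ring
  linarith

lemma eig_le_lone {D : ℕ} {a : Mat D} {t : ℝ} {v : Fin D → ℝ} (hv : v ≠ 0)
    (h : a.mulVec v = t • v) : t ≤ lone a := by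
  obtain ⟨i₀, hi₀⟩ := Function.ne_iff.mp hv
  obtain ⟨i, -, hi⟩ := Finset.exists_max_image Finset.univ (fun i => |v i|) ⟨i₀, Finset.mem_univ _⟩
  have hpos : 0 < |v i| := lt_of_lt_of_le (abs_pos.mpr hi₀) (hi i₀ (Finset.mem_univ _))
  have h1 : ∑ j, a i j * v j = t * v i := by simpa [Matrix.mulVec, dotProduct] using congrFun h i
  have h2 : |t| * |v i| ≤ lone a * |v i| := by
    rw [← abs_mul, ← h1]
    refine (Finset.abs_sum_le_sum_abs _ _).trans ?_
    calc ∑ j, |a i j * v j| ≤ ∑ j, |a i j| * |v i| := Finset.sum_le_sum fun j _ => by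
          rw [abs_mul]; exact mul_le_mul_of_nonneg_left (hi j (Finset.mem_univ _)) (abs_nonneg _)
      _ = (∑ j, |a i j|) * |v i| := by rw [Finset.sum_mul]
      _ ≤ _ := mul_le_mul_of_nonneg_right (Finset.single_le_sum (f := fun i => ∑ j, |a i j|)
        (fun _ _ => Finset.sum_nonneg fun _ _ => abs_nonneg _) (Finset.mem_univ i)) (abs_nonneg _)
  exact (le_abs_self t).trans (le_of_mul_le_mul_right h2 hpos)

lemma le_eig {D : ℕ} {a : Mat D} {s t : ℝ} {v : Fin D → ℝ} (hv : v ≠ 0)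
    (h : a.mulVec v = t • v) (hp : (a - s • (1 : Mat D)).PosSemidef) : s ≤ t := by
  have h1 := hp.dotProduct_mulVec_nonneg v
  rw [Matrix.sub_mulVec, h, Matrix.smul_mulVec, Matrix.one_mulVec, ← sub_smul] at h1
  simp only [star_trivial, dotProduct_smul, smul_eq_mul] at h1
  have h2 : 0 < v ⬝ᵥ v := by
    simpa using (Matrix.dotProduct_star_self_pos_iff (v := v)).mpr hv
  by_contra! hc
  nlinarith

lemma ellipt_le {D : ℕ} (a : Mat D) {s t : ℝ} (hs : 0 < s) (ht : 0 ≤ t)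
    (h : ∀ (x : ℝ) (v : Fin D → ℝ), v ≠ 0 → a.mulVec v = x • v → s ≤ x ∧ x ≤ t) :
    lamMax a / lamMin a ≤ t / s := by
  unfold lamMax lamMin
  rcases Set.eq_empty_or_nonempty {t : ℝ | ∃ v : Fin D → ℝ, v ≠ 0 ∧ a.mulVec v = t • v} with he | he
  · rw [he]; simp; positivity
  · apply div_le_div₀ ht _ hs
    · exact le_csInf he fun x ⟨v, hv, hx⟩ => (h x v hv hx).1
    · exact csSup_le he fun x ⟨v, hv, hx⟩ => (h x v hv hx).2

lemma ind_right {D : ℕ} (a b : ℝ) (M : Mat D) (u : ℝ) :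
    ContinuousWithinAt (Set.indicator (Set.Ico a b) (fun _ => M)) (Set.Ici u) u := by
  unfold ContinuousWithinAt
  apply tendsto_nhds_of_eventually_eq
  by_cases h1 : u < a
  · filter_upwards [mem_nhdsWithin_of_mem_nhds (Iio_mem_nhds h1)] with x hx
    have hx : x < a := hx
    simp [Set.indicator, not_le.mpr hx, not_le.mpr h1]
  push Not at h1
  by_cases h2 : u < b
  · filter_upwards [mem_nhdsWithin_of_mem_nhds (Iio_mem_nhds h2), self_mem_nhdsWithin] with x hx hx'
    have hx : x < b := hx
    have hx' : u ≤ x := hx'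
    simp [Set.indicator, hx, h1, h2, h1.trans hx']
  · push Not at h2
    filter_upwards [self_mem_nhdsWithin] with x hx'
    have hx' : u ≤ x := hx'
    simp [Set.indicator, not_lt.mpr h2, not_lt.mpr (h2.trans hx')]

lemma ind_left {D : ℕ} (a b : ℝ) (M : Mat D) (u : ℝ) :
    ∃ L, Filter.Tendsto (Set.indicator (Set.Ico a b) (fun _ => M)) (nhdsWithin u (Set.Iio u))
      (nhds L) := by
  by_cases h1 : u ≤ a
  · refine ⟨0, tendsto_nhds_of_eventually_eq ?_⟩
    filter_upwards [self_mem_nhdsWithin] with x hx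
    have hx : x < u := hx
    simp [Set.indicator, not_le.mpr (hx.trans_le h1)]
  push Not at h1
  by_cases h2 : u ≤ b
  · refine ⟨M, tendsto_nhds_of_eventually_eq ?_⟩
    filter_upwards [mem_nhdsWithin_of_mem_nhds (Ioi_mem_nhds h1), self_mem_nhdsWithin] with x hx hx'
    have hx : a < x := hx
    have hx' : x < u := hx'
    simp [Set.indicator, hx.le, hx'.trans_le h2]
  · push Not at h2
    refine ⟨0, tendsto_nhds_of_eventually_eq ?_⟩
    filter_upwards [mem_nhdsWithin_of_mem_nhds (Ioi_mem_nhds h2)] with x hx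
    have hx : b < x := hx
    simp [Set.indicator, not_lt.mpr hx.le]

lemma step_cadlag {D : ℕ} (c : ℝ) (K : ℕ) (Q : Fin K → Mat D) :
    Cadlag (fun u : ℝ =>
        (c * u) • (1 : Mat D) +
          ∑ k : Fin K,
            Set.indicator (Set.Ico ((k : ℝ) / K) (((k : ℝ) + 1) / K)) (fun _ => Q k) u) := by
  have hc : Continuous fun u : ℝ => (c * u) • (1 : Mat D) := by fun_prop
  refine ⟨fun u _ => ?_, fun u _ => ?_⟩
  · exact Filter.Tendsto.add hc.continuousWithinAt
      (tendsto_finsetSum _ fun k _ => ind_right _ _ (Q k) u)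
  · choose L hL using fun k : Fin K => ind_left ((k : ℝ) / K) (((k : ℝ) + 1) / K) (Q k) u
    exact ⟨_, Filter.Tendsto.add (hc.tendsto u |>.mono_left nhdsWithin_le_nhds)
      (tendsto_finsetSum _ fun k _ => hL k)⟩

lemma block_unique {K : ℕ} (hK : 0 < K) {k l : ℕ} {u v : ℝ} (huv : u ≤ v)
    (hk : (k : ℝ) / K ≤ u) (hl : v < ((l : ℝ) + 1) / K) : k ≤ l := by
  have hK' : (0 : ℝ) < K := by exact_mod_cast hK
  have : (k : ℝ) / K < ((l : ℝ) + 1) / K := by linarith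
  rw [div_lt_div_iff_of_pos_right hK'] at this
  have : k < l + 1 := by exact_mod_cast this
  omega

lemma block_exists {K : ℕ} (hK : 0 < K) {u : ℝ} (h0 : 0 ≤ u) (h1 : u < 1) :
    ∃ k : ℕ, k < K ∧ (k : ℝ) / K ≤ u ∧ u < ((k : ℝ) + 1) / K := by
  have hK' : (0 : ℝ) < K := by exact_mod_cast hK
  refine ⟨⌊u * K⌋₊, ?_, ?_, ?_⟩
  · rw [Nat.floor_lt (by positivity)]; nlinarith
  · rw [div_le_iff₀ hK']; exact Nat.floor_le (by positivity)
  · rw [lt_div_iff₀ hK']; exact Nat.lt_floor_add_one _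

lemma step_sum {E : Type*} [AddCommMonoid E] {K : ℕ} (hK : 0 < K) (Q : ℕ → E) {k : ℕ} (hk : k < K)
    {u : ℝ} (h1 : (k : ℝ) / K ≤ u) (h2 : u < ((k : ℝ) + 1) / K) :
    ∑ k : Fin K, Set.indicator (Set.Ico ((k : ℝ) / K) (((k : ℝ) + 1) / K)) (fun _ => Q k) u
      = Q k := by
  rw [Finset.sum_eq_single (⟨k, hk⟩ : Fin K)]
  · simp [Set.indicator, h1, h2]
  · intro l _ hl
    rw [Set.indicator_of_notMem]
    rintro ⟨h3, h4⟩
    apply hl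
    ext
    exact le_antisymm (block_unique hK le_rfl h3 h2) (block_unique hK le_rfl h1 h4)
  · simp

open MeasureTheory in
lemma int_bound {K : ℕ} (hK : 0 < K) (f : ℝ → ℝ) (hf : ∀ u, 0 ≤ f u) (A : ℝ) (W : ℕ → ℝ)
    (hW : ∀ k < K, W k ≤ W (k + 1))
    (h : ∀ (u : ℝ) (k : ℕ), k < K → (k : ℝ) / K ≤ u → u < ((k : ℝ) + 1) / K → 0 ≤ u → u < 1 →
      f u ≤ A + (W (k + 1) - W k)) :
    ∫ u in (0:ℝ)..1, f u ≤ A + (W K - W 0) / K := by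
  have hK' : (0 : ℝ) < K := by exact_mod_cast hK
  rw [intervalIntegral.integral_of_le zero_le_one, integral_Ioc_eq_integral_Ioo]
  have hi : ∀ k : Fin K, Integrable (Set.indicator (Set.Ico ((k : ℝ) / K) (((k : ℝ) + 1) / K))
      (fun _ => W (k + 1) - W k)) (volume.restrict (Set.Ioo (0:ℝ) 1)) := fun k =>
    (integrable_const _).indicator measurableSet_Ico
  calc ∫ u in Set.Ioo (0:ℝ) 1, f u
      ≤ ∫ u in Set.Ioo (0:ℝ) 1, (A + ∑ k : Fin K,
        Set.indicator (Set.Ico ((k : ℝ) / K) (((k : ℝ) + 1) / K)) (fun _ => W (k + 1) - W k) u) := by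
        apply integral_mono_of_nonneg
        · exact Filter.Eventually.of_forall hf
        · exact (integrable_const _).add (integrable_finsetSum _ fun k _ => hi k)
        · filter_upwards [ae_restrict_mem measurableSet_Ioo] with u hu
          obtain ⟨k, hk, h1, h2⟩ := block_exists hK hu.1.le hu.2
          rw [step_sum hK (fun k => W (k + 1) - W k) hk h1 h2]
          exact h u k hk h1 h2 hu.1.le hu.2
    _ = A + ∑ k : Fin K, ∫ u in Set.Ioo (0:ℝ) 1,
        Set.indicator (Set.Ico ((k : ℝ) / K) (((k : ℝ) + 1) / K)) (fun _ => W (k + 1) - W k) u := by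
        rw [integral_add (integrable_const _) (integrable_finsetSum _ fun k _ => hi k),
          integral_finsetSum _ fun k _ => hi k]
        simp
    _ ≤ A + ∑ k : Fin K, (W (k + 1) - W k) / K := by
        gcongr with k
        rw [integral_indicator_const _ measurableSet_Ico, smul_eq_mul, div_eq_mul_inv (W _ - W _), mul_comm]
        refine mul_le_mul_of_nonneg_left ?_ (by linarith [hW k k.2])
        rw [measureReal_restrict_apply measurableSet_Ico]
        refine (measureReal_mono Set.inter_subset_left (by simp)).trans ?_
        rw [Real.volume_real_Ico_of_le (div_le_div_of_nonneg_right (by linarith) hK'.le)]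
        apply le_of_eq
        field_simp
        ring
    _ = _ := by
        rw [← Finset.sum_div, Finset.sum_fin_eq_sum_range]
        rw [← Finset.sum_range_sub]
        congr 2
        exact Finset.sum_congr rfl fun k hk => by simp [Finset.mem_range.mp hk]

lemma psd_smul_one {D : ℕ} {s : ℝ} (hs : 0 ≤ s) : (s • (1 : Mat D)).PosSemidef :=
  Matrix.PosSemidef.one.smul hs

lemma step_isQ {D : ℕ} {K : ℕ} (hK : 0 < K) {c B : ℝ} (hc : 0 < c) (hB0 : 0 ≤ B) (P : ℕ → Mat D)
    (hP0 : P 0 = 0) (hP : ∀ k l, k ≤ l → l < K → (P l - P k).PosSemidef)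
    (hB : ∀ k, k < K → lone (P k) ≤ B) :
    IsQInftyUp (fun u : ℝ =>
        (c * u) • (1 : Mat D) +
          ∑ k : Fin K,
            Set.indicator (Set.Ico ((k : ℝ) / K) (((k : ℝ) + 1) / K))
              (fun _ => (c * ((k : ℝ) / K)) • (1 : Mat D) + P k) u) := by
  have hK' : (0 : ℝ) < K := by exact_mod_cast hK
  have hcad := step_cadlag c K (fun k : Fin K => (c * ((k : ℝ) / K)) • (1 : Mat D) + P k)
  set r : ℝ → Mat D := fun u : ℝ =>
        (c * u) • (1 : Mat D) +
          ∑ k : Fin K,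
            Set.indicator (Set.Ico ((k : ℝ) / K) (((k : ℝ) + 1) / K))
              (fun _ => (c * ((k : ℝ) / K)) • (1 : Mat D) + P k) u with hr
  have key : ∀ u, 0 ≤ u → u < 1 → ∃ k : ℕ, k < K ∧ (k : ℝ) / K ≤ u ∧ u < ((k : ℝ) + 1) / K ∧
      r u = (c * u + c * ((k : ℝ) / K)) • (1 : Mat D) + P k := by
    intro u h0 h1
    obtain ⟨k, hk, h2, h3⟩ := block_exists hK h0 h1
    refine ⟨k, hk, h2, h3, ?_⟩
    rw [hr]
    simp only
    rw [step_sum hK (fun k : ℕ => (c * ((k : ℝ) / K)) • (1 : Mat D) + P k) hk h2 h3, add_smul,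
      add_assoc]
  have key2 : ∀ u v, 0 ≤ u → u ≤ v → v < 1 → ∃ k l : ℕ, k ≤ l ∧ l < K ∧ 
      r v - r u = (c * (v - u) + c * (((l : ℝ) - k) / K)) • (1 : Mat D) + (P l - P k) := by
    intro u v h0 huv h1
    obtain ⟨k, hk, h2, h3, h4⟩ := key u h0 (huv.trans_lt h1)
    obtain ⟨l, hl, h5, h6, h7⟩ := key v (h0.trans huv) h1
    refine ⟨k, l, block_unique hK huv h2 h6, hl, ?_⟩
    rw [h4, h7]
    have : c * (v - u) + c * (((l : ℝ) - k) / K)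
      = (c * v + c * ((l : ℝ) / K)) - (c * u + c * ((k : ℝ) / K)) := by ring
    rw [this, sub_smul]
    abel
  have hr0 : r 0 = 0 := by
    obtain ⟨k, hk, h2, h3, h4⟩ := key 0 le_rfl one_pos
    have : k = 0 := by
      have := block_unique hK (k := k) (l := 0) le_rfl h2 (by simpa using hK)
      omega
    subst this
    rw [h4, hP0]; simp
  have hmono : ∀ u v : ℝ, 0 ≤ u → u ≤ v → v < 1 → (r v - r u).PosSemidef := by
    intro u v h0 huv h1
    obtain ⟨k, l, hkl, hl, h⟩ := key2 u v h0 huv h1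
    rw [h]
    have hkl' : (0 : ℝ) ≤ (l : ℝ) - k := by simpa using hkl
    have : 0 ≤ v - u := by linarith
    exact (psd_smul_one (by positivity)).add (hP k l hkl hl)
  set L := lone (1 : Mat D) with hL
  have hL0 : 0 ≤ L := lone_nonneg _
  have hbd : ∀ u v : ℝ, 0 ≤ u → u ≤ v → v < 1 → lone (r v - r u) ≤ 2 * c * L + 2 * B := by
    intro u v h0 huv h1
    obtain ⟨k, l, hkl, hl, h⟩ := key2 u v h0 huv h1
    rw [h]
    have hkl' : (0 : ℝ) ≤ (l : ℝ) - k := by simpa using hkl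
    have h2 : ((l : ℝ) - k) / K ≤ 1 := by
      rw [div_le_one hK']
      have : (l : ℝ) ≤ K := by exact_mod_cast hl.le
      have : (0 : ℝ) ≤ k := by positivity
      linarith
    have h3 : 0 ≤ v - u := by linarith
    refine (lone_add _ _).trans ?_
    rw [lone_smul, abs_of_nonneg (by positivity)]
    have h4 := lone_sub (P l) (P k)
    have h5 := hB l hl
    have h6 := hB k (by omega)
    have h7 : c * (v - u) + c * (((l : ℝ) - k) / K) ≤ 2 * c := by
      rw [← mul_add]; nlinarith
    have := mul_le_mul_of_nonneg_right h7 hL0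
    linarith
  set β := 2 * c * L + 2 * B with hβ
  have hβ0 : 0 ≤ β := by positivity
  refine ⟨fun u hu => ?_, ⟨β, fun u hu => ?_⟩, hmono, hcad, hr0, ?_⟩
  · simpa [hr0] using hmono 0 u le_rfl hu.1 hu.2
  · refine (fnorm_le_lone _).trans ?_
    simpa [hr0] using hbd 0 u le_rfl hu.1 hu.2
  have hα : 0 < c / K := by positivity
  have hM : 0 ≤ β / (c / K) := by positivity
  refine ⟨1 / (1 / c + 1 + β / (c / K)), by positivity, fun u v h0 huv h1 => ?_⟩
  have hcle : 1 / (1 / c + 1 + β / (c / K)) ≤ c := by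
    rw [div_le_iff₀ (by positivity)]
    have : c * (1 / c) = 1 := by field_simp
    nlinarith [mul_nonneg hc.le hM]
  have hbd' := hbd u v h0 huv.le h1
  obtain ⟨k, l, hkl, hl, h⟩ := key2 u v h0 huv.le h1
  have hkl' : (0 : ℝ) ≤ (l : ℝ) - k := by simpa using hkl
  have hvu : 0 < v - u := by linarith
  rw [one_div_one_div]
  constructor
  · rw [h]
    have : ∀ x y : ℝ, ∀ M : Mat D, x • (1 : Mat D) + M - y • (1 : Mat D) = (x - y) • 1 + M := by
      intro x y M; rw [sub_smul]; abel
    rw [this]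
    refine (psd_smul_one ?_).add (hP k l hkl hl)
    have h2 := mul_le_mul_of_nonneg_right hcle hvu.le
    have : 0 ≤ c * (((l : ℝ) - k) / K) := by positivity
    linarith
  · rcases hkl.eq_or_lt with rfl | hlt
    · have h2 : r v - r u = (c * (v - u)) • (1 : Mat D) := by rw [h]; simp
      have h3 : 0 < c * (v - u) := by positivity
      refine (ellipt_le (r v - r u) h3 h3.le ?_).trans ?_
      · intro x w hw hx
        rw [h2, Matrix.smul_mulVec, Matrix.one_mulVec] at hx
        have := smul_left_injective ℝ hw hx
        exact ⟨this.le, this.ge⟩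
      · rw [div_self h3.ne']
        have : 0 < 1 / c := by positivity
        linarith
    · refine (ellipt_le (r v - r u) hα hβ0 ?_).trans ?_
      · intro x w hw hx
        refine ⟨le_eig hw hx ?_, (eig_le_lone hw hx).trans hbd'⟩
        rw [h]
        have : ∀ x y : ℝ, ∀ M : Mat D, x • (1 : Mat D) + M - y • (1 : Mat D) = (x - y) • 1 + M := by
          intro x y M; rw [sub_smul]; abel
        rw [this]
        refine (psd_smul_one ?_).add (hP k l hkl hl)
        have h4 : (1 : ℝ) ≤ (l : ℝ) - k := by
          have : (k : ℝ) + 1 ≤ l := by exact_mod_cast hlt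
          linarith
        have h5 : c / K ≤ c * (((l : ℝ) - k) / K) := by
          rw [← mul_div_assoc]
          apply div_le_div_of_nonneg_right _ hK'.le
          nlinarith
        have : 0 ≤ c * (v - u) := by positivity
        linarith
      · have : 0 < 1 / c := by positivity
        linarith

theorem QInftyUp_dense_L1
    (D : ℕ) (hD : 1 ≤ D) (q : ℝ → Mat D)
    (hqpsd : ∀ u ∈ Set.Ico (0:ℝ) 1, (q u).PosSemidef)
    (hqbdd : ∃ C : ℝ, ∀ u ∈ Set.Ico (0:ℝ) 1, fnorm (q u) ≤ C)
    (hqmono : ∀ u v : ℝ, 0 ≤ u → u ≤ v → v < 1 → (q v - q u).PosSemidef)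
    (hqcadlag : Cadlag q)
    (ε : ℝ) (hε : 0 < ε) :
    ∃ (K : ℕ), 1 ≤ K ∧ ∃ (c : ℝ), 0 < c ∧ ∃ (Q : Fin K → Mat D),
      (∀ k : Fin K, (k : ℕ) = 0 → Q k = 0) ∧
      (∀ k l : Fin K, k ≤ l → (Q l - Q k).PosSemidef) ∧
      (∀ k : Fin K, (k : ℕ) ≠ 0 → (Q k).PosDef) ∧
      IsQInftyUp (fun u : ℝ =>
        (c * u) • (1 : Mat D) +
          ∑ k : Fin K,
            Set.indicator (Set.Ico ((k : ℝ) / K) (((k : ℝ) + 1) / K)) (fun _ => Q k) u) ∧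
      (∫ u in (0:ℝ)..1,
        fnorm (q u -
          ((c * u) • (1 : Mat D) +
            ∑ k : Fin K,
              Set.indicator (Set.Ico ((k : ℝ) / K) (((k : ℝ) + 1) / K)) (fun _ => Q k) u)))
        < ε := by
  obtain ⟨C, hC⟩ := hqbdd
  set L := lone (1 : Mat D) with hL
  have hL0 : 0 ≤ L := lone_nonneg _
  set T := (D : ℝ) * C with hT
  have hTr : ∀ u, 0 ≤ u → u < 1 → (q u).trace ≤ T := by
    intro u h0 h1
    calc (q u).trace = ∑ i, q u i i := rfl
      _ ≤ ∑ _i : Fin D, C := Finset.sum_le_sum fun i _ =>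
        (le_abs_self _).trans ((abs_le_fnorm _ i i).trans (hC u ⟨h0, h1⟩))
      _ = T := by simp [hT]
  have hT0 : 0 ≤ T := (hqpsd 0 ⟨le_rfl, one_pos⟩).trace_nonneg.trans (hTr 0 le_rfl one_pos)
  obtain ⟨n, hn⟩ := exists_nat_gt (2 * (D * T) / ε)
  set K := n + 1 with hKdef
  have hK : 0 < K := Nat.succ_pos _
  have hK' : (0 : ℝ) < K := by exact_mod_cast hK
  have hKε : D * T / K < ε / 2 := by
    rw [div_lt_iff₀ hε] at hn
    rw [div_lt_iff₀ hK', hKdef]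
    push_cast
    nlinarith
  set c := ε / (4 * (L + 1)) with hcdef
  have hc : 0 < c := by positivity
  have hcε : 2 * c * L ≤ ε / 2 := by
    have : c * (4 * (L + 1)) = ε := by rw [hcdef]; field_simp
    nlinarith
  set P : ℕ → Mat D := fun k => if k = 0 then 0 else q ((k : ℝ) / K) with hPdef
  have hP0 : P 0 = 0 := by simp [hPdef]
  have hmem : ∀ k : ℕ, k < K → (0 : ℝ) ≤ (k : ℝ) / K ∧ (k : ℝ) / K < 1 := fun k hk =>
    ⟨by positivity, by rw [div_lt_one hK']; exact_mod_cast hk⟩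
  have hPq : ∀ k : ℕ, ∀ u : ℝ, (k : ℝ) / K ≤ u → u < 1 → (q u - P k).PosSemidef := by
    intro k u hk h1
    have hk0 : (0 : ℝ) ≤ (k : ℝ) / K := by positivity
    by_cases h : k = 0
    · simpa [hPdef, h] using hqpsd u ⟨hk0.trans hk, h1⟩
    · simpa [hPdef, h] using hqmono _ u hk0 hk h1
  have hP : ∀ k l, k ≤ l → l < K → (P l - P k).PosSemidef := by
    intro k l hkl hl
    by_cases h : l = 0
    · have : k = 0 := by omega
      subst this; subst h; simpa using Matrix.PosSemidef.zero
    · have h2 : P l = q ((l : ℝ) / K) := by simp [hPdef, h]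
      rw [h2]
      exact hPq k _ (by gcongr) (hmem l hl).2
  have hPpsd : ∀ k, k < K → (P k).PosSemidef := fun k hk => by
    simpa [hP0] using hP 0 k (Nat.zero_le _) hk
  have hPtr : ∀ k, k < K → (P k).trace ≤ T := by
    intro k hk
    by_cases h : k = 0
    · simpa [h, hP0] using hT0
    · simpa [hPdef, h] using hTr _ (hmem k hk).1 (hmem k hk).2
  have hPB : ∀ k, k < K → lone (P k) ≤ D * T := fun k hk =>
    (psd_lone (hPpsd k hk)).trans (by gcongr; exact hPtr k hk)
  refine ⟨K, hK, c, hc, fun k => (c * ((k : ℝ) / K)) • (1 : Mat D) + P k, ?_, ?_, ?_,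
    step_isQ hK hc (by positivity) P hP0 hP hPB, ?_⟩
  · intro k hk
    simp [hk, hP0]
  · intro k l hkl
    have h1 : (k : ℝ) / K ≤ (l : ℝ) / K := by
      have : ((k : ℕ) : ℝ) ≤ (l : ℕ) := by exact_mod_cast hkl
      gcongr
    have h2 := (psd_smul_one (D := D) (s := c * ((l : ℝ) / K) - c * ((k : ℝ) / K))
      (by nlinarith)).add (hP k l hkl l.2)
    rw [sub_smul] at h2
    rw [← add_sub_add_comm] at h2
    exact h2
  · intro k hk
    have : (0 : ℝ) < (k : ℕ) := by exact_mod_cast Nat.pos_of_ne_zero hk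
    exact (Matrix.PosDef.one.smul (show 0 < c * ((k : ℝ) / K) by positivity)).add_posSemidef
      (hPpsd k k.2)
  · set W : ℕ → ℝ := fun k => D * (if k < K then (P k).trace else T) with hW
    have hmonoW : ∀ k < K, W k ≤ W (k + 1) := by
      intro k hk
      simp only [hW, hk, if_true]
      gcongr
      split_ifs with h
      · have := (hP k (k + 1) (by omega) h).trace_nonneg
        rw [Matrix.trace_sub] at this
        linarith
      · exact hPtr k hk
    refine (int_bound hK _ (fun u => Real.sqrt_nonneg _) (2 * c * L) W hmonoW ?_).trans_lt ?_
    · intro u k hk h1 h2 hu0 hu1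
      rw [step_sum hK (fun k : ℕ => (c * ((k : ℝ) / K)) • (1 : Mat D) + P k) hk h1 h2]
      refine (fnorm_le_lone _).trans ?_
      have e : q u - ((c * u) • (1 : Mat D) + ((c * ((k : ℝ) / K)) • (1 : Mat D) + P k))
          = (q u - P k) - (c * u + c * ((k : ℝ) / K)) • (1 : Mat D) := by
        rw [add_smul]; abel
      rw [e]
      refine (lone_sub _ _).trans ?_
      have hk0 : (0 : ℝ) ≤ (k : ℝ) / K := by positivity
      rw [lone_smul, abs_of_nonneg (by positivity)]
      have h3 := psd_lone (hPq k u h1 hu1)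
      rw [Matrix.trace_sub] at h3
      have h4 : (c * u + c * ((k : ℝ) / K)) ≤ 2 * c := by nlinarith
      have h5 := mul_le_mul_of_nonneg_right h4 hL0
      have h6 : D * (q u).trace ≤ W (k + 1) := by
        simp only [hW]
        gcongr
        split_ifs with h
        · have e2 : P (k + 1) = q (((k + 1 : ℕ) : ℝ) / K) := by simp [hPdef]
          rw [e2]
          have := (hqmono u (((k + 1 : ℕ) : ℝ) / K) hu0 (by push_cast; exact h2.le)
            (hmem _ h).2).trace_nonneg
          rw [Matrix.trace_sub] at this
          linarith
        · exact hTr u hu0 hu1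
      have h7 : W k = D * (P k).trace := by simp [hW, hk]
      rw [h7]
      linarith
    · have h1 : W K = D * T := by simp [hW]
      have h2 : W 0 = 0 := by simp [hW, hP0]
      rw [h1, h2, sub_zero]
      linarith

end
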